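/- Bochner-type formula for the difference tensor of a Hessian metric: at every point of Ω, (1/2)Δ|γ|² = Σ (∇_i∇_jα_k)γ_{ijk} + |∇γ|² + |Rm|² + |Ric|² + Σ R_{ij}β_{ij} − Σ R_{ij}∇_iα_j, where in each sum every repeated lower index pair is contracted with g^{··} (so, e.g., Σ(∇_i∇_jα_k)γ_{ijk} means Σ g^{ii'}g^{jj'}g^{kk'}(∇_i∇_jα_k)γ_{i'j'k'}), |∇γ|², |Rm|² and |Ric|² are the squared g-norms of ∇γ, the curvature tensor and the Ricci tensor, and |γ|² is the squared g-norm of γ. -/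

import Mathlib

/-!
The difference tensor is treated as an `End`-valued one-form: `Gm φ k` is the matrix
`(Γ_k)^a_b = Γ^a_{kb}`, with covariant derivatives `Nm φ k i = ∇_k Γ_i` and
`Fm φ m k i = ∇_m ∇_k Γ_i`, so that index contractions become traces of matrix products and
`|γ|² = Σ g^{ij} tr (Γ_i Γ_j)` (`HessOn.normGamSq_eq`).

Metric compatibility (`HessOn.pd_ip`) gives
`(1/2) Δ|γ|² = Σ g^{mk} g^{ij} tr ((∇_m ∇_k Γ_i) Γ_j) + |∇γ|²` (`HessOn.half_lap`).
Two facts specific to Hessian metrics are then used: `∇γ` is totally symmetric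
(`HessOn.K12`, `HessOn.K23`, `HessOn.K34`), and the curvature is a commutator,
`R_{kl} = -[Γ_k, Γ_l]` (`HessOn.Rm_eq`), whence `R_{jk} = tr (Γ_j Γ_k) - Σ Γ^r_{jk} α_r`
(`HessOn.Ricci_eq`), that is, `tr (Γ_j Γ_k) = R_{jk} + β_{jk} - ∇_j α_k`.

By symmetry `∇_m ∇_k Γ_i = ∇_m ∇_i Γ_k`, and exchanging `∇_m` and `∇_i` with the Ricci identity
(`HessOn.ricci_identity`) gives three contributions (`HessOn.trace_Fm_Gm`):
* `∇_i ∇_m Γ_k`, whose contraction over `m, k` is `∇_i ∇ α` by total symmetry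
  (`HessOn.cov2_part`);
* the commutator `[R_{mi}, Γ_k]`, which paired with `Γ_j` is `-tr (R_{mi} R_{kj})` and sums
  to `|Rm|²` (`HessOn.normRmSq_eq`);
* the curvature acting on the form index, which contracts to the Ricci tensor paired with
  `tr (Γ_a Γ_j)`, that is, to `|Ric|² + Σ R_{ij} β_{ij} - Σ R_{ij} ∇_i α_j`
  (`HessOn.ric_part`).
-/

noncomputable section

/-- Partial derivative in the `i`-th coordinate direction. -/
def pd {n : ℕ} (i : Fin n) (f : (Fin n → ℝ) → ℝ) : (Fin n → ℝ) → ℝ :=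
  fun x => fderiv ℝ f x (Pi.single i 1)

variable {n : ℕ}

/-- The Hessian metric `g_{ij} = ∂_i ∂_j φ`. -/
def gmet (φ : (Fin n → ℝ) → ℝ) (x : Fin n → ℝ) : Matrix (Fin n) (Fin n) ℝ :=
  fun i j => pd i (pd j φ) x

/-- The inverse metric `g^{ij}`. -/
def gi (φ : (Fin n → ℝ) → ℝ) (x : Fin n → ℝ) : Matrix (Fin n) (Fin n) ℝ :=
  (gmet φ x)⁻¹

/-- The lowered difference tensor `γ_{ijk} = (1/2) ∂_i∂_j∂_k φ`. -/
def gam (φ : (Fin n → ℝ) → ℝ) (i j k : Fin n) : (Fin n → ℝ) → ℝ :=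
  fun x => (1 / 2) * pd i (pd j (pd k φ)) x

/-- The Christoffel symbols `Γ^i_{jk} = Σ_p g^{ip} γ_{pjk}`. -/
def Chr (φ : (Fin n → ℝ) → ℝ) (i j k : Fin n) : (Fin n → ℝ) → ℝ :=
  fun x => ∑ p, gi φ x i p * gam φ p j k x

/-- The first Koszul form `α_i = Σ_{r,p} g^{rp} γ_{pri}`. -/
def alph (φ : (Fin n → ℝ) → ℝ) (i : Fin n) : (Fin n → ℝ) → ℝ :=
  fun x => ∑ r, ∑ p, gi φ x r p * gam φ p r i x

/-- The second Koszul form `β_{ij} = ∂_i α_j`. -/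
def bet (φ : (Fin n → ℝ) → ℝ) (i j : Fin n) : (Fin n → ℝ) → ℝ :=
  pd i (alph φ j)

/-- Covariant derivative of the first Koszul form `∇_i α_j`. -/
def covAlpha (φ : (Fin n → ℝ) → ℝ) (i j : Fin n) : (Fin n → ℝ) → ℝ :=
  fun x => bet φ i j x - ∑ r, Chr φ r i j x * alph φ r x

/-- Covariant derivative of a covector field `∇_i X_j`. -/
def covCo (φ : (Fin n → ℝ) → ℝ) (X : Fin n → (Fin n → ℝ) → ℝ) (i j : Fin n) :
    (Fin n → ℝ) → ℝ :=
  fun x => pd i (X j) x - ∑ r, Chr φ r i j x * X r x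

/-- The Hessian `∇_i∇_j f` of a function. -/
def covHess (φ f : (Fin n → ℝ) → ℝ) (i j : Fin n) : (Fin n → ℝ) → ℝ :=
  fun x => pd i (pd j f) x - ∑ r, Chr φ r i j x * pd r f x

/-- Covariant derivative of the difference tensor `∇_i γ_{jkl}`. -/
def covGam (φ : (Fin n → ℝ) → ℝ) (i j k l : Fin n) : (Fin n → ℝ) → ℝ :=
  fun x => pd i (gam φ j k l) x -
    ∑ r, (Chr φ r i j x * gam φ r k l x + Chr φ r i k x * gam φ j r l x +
      Chr φ r i l x * gam φ j k r x)

/-- Second covariant derivative of the first Koszul form `∇_i∇_j α_k`. -/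
def cov2Alpha (φ : (Fin n → ℝ) → ℝ) (i j k : Fin n) : (Fin n → ℝ) → ℝ :=
  fun x => pd i (covAlpha φ j k) x -
    ∑ r, (Chr φ r i j x * covAlpha φ r k x + Chr φ r i k x * covAlpha φ j r x)

/-- The curvature tensor `R^i_{jkl}`. -/
def Riem (φ : (Fin n → ℝ) → ℝ) (i j k l : Fin n) : (Fin n → ℝ) → ℝ :=
  fun x => pd k (Chr φ i l j) x - pd l (Chr φ i k j) x +
    ∑ r, (Chr φ i k r x * Chr φ r l j x - Chr φ i l r x * Chr φ r k j x)

/-- The Ricci tensor `R_{jk} = Σ_s R^s_{jsk}`. -/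
def Ricci (φ : (Fin n → ℝ) → ℝ) (j k : Fin n) : (Fin n → ℝ) → ℝ :=
  fun x => ∑ s, Riem φ s j s k x

/-- The scalar curvature `R = Σ g^{jk} R_{jk}`. -/
def Scal (φ : (Fin n → ℝ) → ℝ) : (Fin n → ℝ) → ℝ :=
  fun x => ∑ j, ∑ k, gi φ x j k * Ricci φ j k x

/-- The Laplace–Beltrami operator of `g`. -/
def lap (φ u : (Fin n → ℝ) → ℝ) : (Fin n → ℝ) → ℝ :=
  fun x => ∑ i, ∑ j, gi φ x i j * (pd i (pd j u) x - ∑ k, Chr φ k i j x * pd k u x)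

/-- `|α|²`. -/
def normAlphaSq (φ : (Fin n → ℝ) → ℝ) : (Fin n → ℝ) → ℝ :=
  fun x => ∑ i, ∑ j, gi φ x i j * alph φ i x * alph φ j x

/-- `|γ|²`. -/
def normGamSq (φ : (Fin n → ℝ) → ℝ) : (Fin n → ℝ) → ℝ :=
  fun x => ∑ i, ∑ i', ∑ j, ∑ j', ∑ k, ∑ k',
    gi φ x i i' * gi φ x j j' * gi φ x k k' * gam φ i j k x * gam φ i' j' k' x

/-- `|∇γ|²`. -/
def normCovGamSq (φ : (Fin n → ℝ) → ℝ) : (Fin n → ℝ) → ℝ :=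
  fun x => ∑ i, ∑ i', ∑ j, ∑ j', ∑ k, ∑ k', ∑ l, ∑ l',
    gi φ x i i' * gi φ x j j' * gi φ x k k' * gi φ x l l' *
      covGam φ i j k l x * covGam φ i' j' k' l' x

/-- `|Rm|²` (the upper index is lowered with `g`). -/
def normRmSq (φ : (Fin n → ℝ) → ℝ) : (Fin n → ℝ) → ℝ :=
  fun x => ∑ i, ∑ i', ∑ j, ∑ j', ∑ k, ∑ k', ∑ l, ∑ l',
    gmet φ x i i' * gi φ x j j' * gi φ x k k' * gi φ x l l' *
      Riem φ i j k l x * Riem φ i' j' k' l' x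

/-- `|Ric|²`. -/
def normRicSq (φ : (Fin n → ℝ) → ℝ) : (Fin n → ℝ) → ℝ :=
  fun x => ∑ j, ∑ j', ∑ k, ∑ k',
    gi φ x j j' * gi φ x k k' * Ricci φ j k x * Ricci φ j' k' x

/-- The full contraction `Σ R_{ij} β_{ij}`. -/
def ricBeta (φ : (Fin n → ℝ) → ℝ) : (Fin n → ℝ) → ℝ :=
  fun x => ∑ i, ∑ i', ∑ j, ∑ j',
    gi φ x i i' * gi φ x j j' * Ricci φ i j x * bet φ i' j' x

/-- The full contraction `Σ R_{ij} ∇_i α_j`. -/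
def ricCovAlpha (φ : (Fin n → ℝ) → ℝ) : (Fin n → ℝ) → ℝ :=
  fun x => ∑ i, ∑ i', ∑ j, ∑ j',
    gi φ x i i' * gi φ x j j' * Ricci φ i j x * covAlpha φ i' j' x

/-- The full contraction `Σ (∇_i∇_j α_k) γ_{ijk}`. -/
def cov2AlphaGam (φ : (Fin n → ℝ) → ℝ) : (Fin n → ℝ) → ℝ :=
  fun x => ∑ i, ∑ i', ∑ j, ∑ j', ∑ k, ∑ k',
    gi φ x i i' * gi φ x j j' * gi φ x k k' * cov2Alpha φ i j k x * gam φ i' j' k' x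

variable {n : ℕ}

/-! ### Smoothness and coordinate derivatives of functions and matrices -/

open scoped ContDiff

/-- `f` is `C^∞` at `x`. -/
abbrev Sm {n : ℕ} (f : (Fin n → ℝ) → ℝ) (x : Fin n → ℝ) : Prop :=
  ContDiffAt ℝ ∞ f x

lemma Sm.diff {f : (Fin n → ℝ) → ℝ} {x : Fin n → ℝ} (h : Sm f x) : DifferentiableAt ℝ f x :=
  h.differentiableAt (by simp)

lemma Sm.pd {f : (Fin n → ℝ) → ℝ} {x : Fin n → ℝ} (h : Sm f x) (i : Fin n) : Sm (pd i f) x := by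
  have h1 : ContDiffAt ℝ ∞ (fderiv ℝ f) x := h.fderiv_right (by simp)
  exact h1.clm_apply contDiffAt_const

lemma Sm.sum {ι : Type*} {s : Finset ι} {f : ι → (Fin n → ℝ) → ℝ} {x : Fin n → ℝ}
    (h : ∀ i ∈ s, Sm (f i) x) : Sm (fun y => ∑ i ∈ s, f i y) x :=
  ContDiffAt.sum h

lemma pd_congr {f g : (Fin n → ℝ) → ℝ} {Ω : Set (Fin n → ℝ)} (hΩ : IsOpen Ω)
    (h : ∀ y ∈ Ω, f y = g y) {x : Fin n → ℝ} (hx : x ∈ Ω) (i : Fin n) : pd i f x = pd i g x := by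
  have : f =ᶠ[nhds x] g := by
    filter_upwards [hΩ.mem_nhds hx] with y hy using h y hy
  simp only [pd, this.fderiv_eq]

lemma pd_add {f g : (Fin n → ℝ) → ℝ} {x : Fin n → ℝ} (hf : Sm f x) (hg : Sm g x) (i : Fin n) :
    pd i (fun y => f y + g y) x = pd i f x + pd i g x := by
  simp [pd, fderiv_fun_add hf.diff hg.diff]

lemma pd_sub {f g : (Fin n → ℝ) → ℝ} {x : Fin n → ℝ} (hf : Sm f x) (hg : Sm g x) (i : Fin n) :
    pd i (fun y => f y - g y) x = pd i f x - pd i g x := by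
  simp [pd, fderiv_fun_sub hf.diff hg.diff]

lemma pd_mul {f g : (Fin n → ℝ) → ℝ} {x : Fin n → ℝ} (hf : Sm f x) (hg : Sm g x) (i : Fin n) :
    pd i (fun y => f y * g y) x = pd i f x * g x + f x * pd i g x := by
  simp [pd, fderiv_fun_mul hf.diff hg.diff]; ring

lemma pd_sum {ι : Type*} {s : Finset ι} {f : ι → (Fin n → ℝ) → ℝ} {x : Fin n → ℝ}
    (h : ∀ i ∈ s, Sm (f i) x) (k : Fin n) :
    pd k (fun y => ∑ i ∈ s, f i y) x = ∑ i ∈ s, pd k (f i) x := by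
  simp [pd, fderiv_fun_sum (fun i hi => (h i hi).diff)]

lemma pd_const (c : ℝ) (x : Fin n → ℝ) (k : Fin n) : pd k (fun _ => c) x = 0 := by
  simp [pd]

lemma pd_comm {f : (Fin n → ℝ) → ℝ} {x : Fin n → ℝ} (hf : Sm f x) (i j : Fin n) :
    pd i (pd j f) x = pd j (pd i f) x := by
  have h1 : ContDiffAt ℝ ∞ (fderiv ℝ f) x := hf.fderiv_right (by simp)
  have h2 : DifferentiableAt ℝ (fderiv ℝ f) x := h1.differentiableAt (by simp)
  have hs : IsSymmSndFDerivAt ℝ f x := hf.isSymmSndFDerivAt (by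
    rw [minSmoothness_of_isRCLikeNormedField]; exact WithTop.coe_le_coe.2 (le_top : (2 : ℕ∞) ≤ ⊤))
  have key : ∀ a b : Fin n, pd a (pd b f) x
      = fderiv ℝ (fderiv ℝ f) x (Pi.single a 1) (Pi.single b 1) := by
    intro a b
    change fderiv ℝ (fun y => fderiv ℝ f y (Pi.single b 1)) x (Pi.single a 1) = _
    rw [fderiv_clm_apply h2 (differentiableAt_const _)]
    simp
  rw [key, key]
  exact hs _ _

/-- Entrywise partial derivative of a matrix-valued function. -/
def pdM (k : Fin n) (M : (Fin n → ℝ) → Matrix (Fin n) (Fin n) ℝ) (x : Fin n → ℝ) :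
    Matrix (Fin n) (Fin n) ℝ :=
  Matrix.of fun a b => pd k (fun y => M y a b) x

/-- Entrywise smoothness at `x` of a matrix-valued function. -/
def SmM (M : (Fin n → ℝ) → Matrix (Fin n) (Fin n) ℝ) (x : Fin n → ℝ) : Prop :=
  ∀ a b, Sm (fun y => M y a b) x

lemma SmM.mul {M P : (Fin n → ℝ) → Matrix (Fin n) (Fin n) ℝ} {x : Fin n → ℝ}
    (hM : SmM M x) (hP : SmM P x) : SmM (fun y => M y * P y) x := fun a b => by
  simp only [Matrix.mul_apply]
  exact Sm.sum fun c _ => (hM a c).mul (hP c b)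

lemma SmM.add {M P : (Fin n → ℝ) → Matrix (Fin n) (Fin n) ℝ} {x : Fin n → ℝ}
    (hM : SmM M x) (hP : SmM P x) : SmM (fun y => M y + P y) x := fun a b =>
  (hM a b).add (hP a b)

lemma SmM.sub {M P : (Fin n → ℝ) → Matrix (Fin n) (Fin n) ℝ} {x : Fin n → ℝ}
    (hM : SmM M x) (hP : SmM P x) : SmM (fun y => M y - P y) x := fun a b =>
  (hM a b).sub (hP a b)

lemma SmM.sum_smul {c : Fin n → (Fin n → ℝ) → ℝ}
    {M : Fin n → (Fin n → ℝ) → Matrix (Fin n) (Fin n) ℝ} {x : Fin n → ℝ}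
    (hc : ∀ a, Sm (c a) x) (hM : ∀ a, SmM (M a) x) :
    SmM (fun y => ∑ a, c a y • M a y) x := fun a b => by
  simp only [Matrix.sum_apply, Matrix.smul_apply, smul_eq_mul]
  exact Sm.sum fun e _ => (hc e).mul (hM e a b)

lemma SmM.pdM {M : (Fin n → ℝ) → Matrix (Fin n) (Fin n) ℝ} {x : Fin n → ℝ}
    (hM : SmM M x) (k : Fin n) : SmM (pdM k M) x := fun a b => (hM a b).pd k

lemma SmM.trace {M : (Fin n → ℝ) → Matrix (Fin n) (Fin n) ℝ} {x : Fin n → ℝ}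
    (hM : SmM M x) : Sm (fun y => (M y).trace) x :=
  Sm.sum fun a _ => hM a a

lemma pd_trace {M : (Fin n → ℝ) → Matrix (Fin n) (Fin n) ℝ} {x : Fin n → ℝ}
    (hM : SmM M x) (k : Fin n) : pd k (fun y => (M y).trace) x = (pdM k M x).trace :=
  pd_sum (fun a _ => hM a a) k

lemma pdM_mul {M P : (Fin n → ℝ) → Matrix (Fin n) (Fin n) ℝ} {x : Fin n → ℝ}
    (hM : SmM M x) (hP : SmM P x) (k : Fin n) :
    pdM k (fun y => M y * P y) x = pdM k M x * P x + M x * pdM k P x := by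
  ext a b
  simp only [pdM, Matrix.of_apply, Matrix.add_apply, Matrix.mul_apply]
  rw [pd_sum (fun c _ => (hM a c).mul (hP c b)), ← Finset.sum_add_distrib]
  exact Finset.sum_congr rfl fun c _ => pd_mul (hM a c) (hP c b) k

lemma pdM_add {M P : (Fin n → ℝ) → Matrix (Fin n) (Fin n) ℝ} {x : Fin n → ℝ}
    (hM : SmM M x) (hP : SmM P x) (k : Fin n) :
    pdM k (fun y => M y + P y) x = pdM k M x + pdM k P x := by
  ext a b; exact pd_add (hM a b) (hP a b) k

lemma pdM_sub {M P : (Fin n → ℝ) → Matrix (Fin n) (Fin n) ℝ} {x : Fin n → ℝ}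
    (hM : SmM M x) (hP : SmM P x) (k : Fin n) :
    pdM k (fun y => M y - P y) x = pdM k M x - pdM k P x := by
  ext a b; exact pd_sub (hM a b) (hP a b) k

lemma pdM_sum_smul {c : Fin n → (Fin n → ℝ) → ℝ}
    {M : Fin n → (Fin n → ℝ) → Matrix (Fin n) (Fin n) ℝ} {x : Fin n → ℝ}
    (hc : ∀ a, Sm (c a) x) (hM : ∀ a, SmM (M a) x) (k : Fin n) :
    pdM k (fun y => ∑ a, c a y • M a y) x
      = ∑ a, (pd k (c a) x • M a x + c a x • pdM k (M a) x) := by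
  ext p q
  simp only [pdM, Matrix.of_apply, Matrix.add_apply, Matrix.sum_apply, Matrix.smul_apply,
    smul_eq_mul]
  rw [pd_sum (fun e _ => (hc e).mul (hM e p q))]
  exact Finset.sum_congr rfl fun e _ => pd_mul (hc e) (hM e p q) k

lemma pdM_comm {M : (Fin n → ℝ) → Matrix (Fin n) (Fin n) ℝ} {x : Fin n → ℝ}
    (hM : SmM M x) (k m : Fin n) : pdM k (pdM m M) x = pdM m (pdM k M) x := by
  ext a b; exact pd_comm (hM a b) k m

lemma pdM_congr {M P : (Fin n → ℝ) → Matrix (Fin n) (Fin n) ℝ} {Ω : Set (Fin n → ℝ)}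
    (hΩ : IsOpen Ω) (h : ∀ y ∈ Ω, M y = P y) {x : Fin n → ℝ} (hx : x ∈ Ω) (k : Fin n) :
    pdM k M x = pdM k P x := by
  ext a b
  exact pd_congr hΩ (fun y hy => by rw [h y hy]) hx k

lemma pdM_transpose (M : (Fin n → ℝ) → Matrix (Fin n) (Fin n) ℝ) (x : Fin n → ℝ) (k : Fin n) :
    pdM k (fun y => (M y).transpose) x = (pdM k M x).transpose := rfl

/-- The inverse of a smooth matrix function is smooth where it exists, being the adjugate
divided by the determinant. -/
lemma SmM.inv {M : (Fin n → ℝ) → Matrix (Fin n) (Fin n) ℝ} {x : Fin n → ℝ}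
    (hM : SmM M x) (hdet : IsUnit (M x).det) : SmM (fun y => (M y)⁻¹) x := by
  have hd : ∀ P : (Fin n → ℝ) → Matrix (Fin n) (Fin n) ℝ, SmM P x → Sm (fun y => (P y).det) x := by
    intro P hP
    simp only [Matrix.det_apply']
    refine Sm.sum fun σ _ => contDiffAt_const.mul ?_
    exact contDiffAt_prod fun i _ => hP _ _
  intro a b
  simp only [Matrix.inv_def, Matrix.smul_apply, smul_eq_mul, Ring.inverse_eq_inv',
    Matrix.adjugate_apply]
  refine ((hd M hM).inv hdet.ne_zero).mul (hd _ ?_)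
  intro c d
  simp only [Matrix.updateRow_apply]
  split_ifs
  · exact contDiffAt_const
  · exact hM c d

/-! ### Metric, Christoffel matrices and covariant differentiation -/

/-- The Hessian of `φ` is nondegenerate on the open set `Ω`. Positivity of the metric plays no
further role in the identity, so only invertibility is recorded. -/
structure HessOn (φ : (Fin n → ℝ) → ℝ) (Ω : Set (Fin n → ℝ)) : Prop where
  smooth : ContDiff ℝ ∞ φ
  isOpen : IsOpen Ω
  det : ∀ y ∈ Ω, IsUnit (gmet φ y).det

/-- The symmetric matrix `(C_k)_{ab} = γ_{akb}`. -/
def Cm (φ : (Fin n → ℝ) → ℝ) (k : Fin n) (x : Fin n → ℝ) : Matrix (Fin n) (Fin n) ℝ :=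
  Matrix.of fun a b => gam φ a k b x

/-- The matrix `(Γ_k)^a_b = Γ^a_{kb}`, i.e. the `k`-th component of the difference tensor viewed
as an endomorphism-valued one-form. -/
def Gm (φ : (Fin n → ℝ) → ℝ) (k : Fin n) (x : Fin n → ℝ) : Matrix (Fin n) (Fin n) ℝ :=
  Matrix.of fun a b => Chr φ a k b x

/-- The covariant derivative `∇_k X_i` of an endomorphism-valued one-form `X`: the Levi-Civita
connection acts on the endomorphism through the commutator with `Γ_k`. -/
def nab (φ : (Fin n → ℝ) → ℝ) (k : Fin n)
    (X : Fin n → (Fin n → ℝ) → Matrix (Fin n) (Fin n) ℝ) (i : Fin n) (x : Fin n → ℝ) :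
    Matrix (Fin n) (Fin n) ℝ :=
  pdM k (X i) x + (Gm φ k x * X i x - X i x * Gm φ k x) - ∑ a, Chr φ a k i x • X a x

/-- `∇_k Γ_i` as a matrix. -/
def Nm (φ : (Fin n → ℝ) → ℝ) (k i : Fin n) (x : Fin n → ℝ) : Matrix (Fin n) (Fin n) ℝ :=
  nab φ k (Gm φ) i x

/-- The second covariant derivative `∇_m ∇_k Γ_i` as a matrix; the last sum in the definition
accounts for the index `k` of the tensor `∇Γ`. -/
def Fm (φ : (Fin n → ℝ) → ℝ) (m k i : Fin n) (x : Fin n → ℝ) : Matrix (Fin n) (Fin n) ℝ :=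
  nab φ m (Nm φ k) i x - ∑ a, Chr φ a m k x • Nm φ a i x

/-- The matrix with entries `∇_m γ_{ipl}`, with rows `p` and columns `l`. -/
def Km (φ : (Fin n → ℝ) → ℝ) (m i : Fin n) (x : Fin n → ℝ) : Matrix (Fin n) (Fin n) ℝ :=
  Matrix.of fun p l => covGam φ m i p l x

/-- The curvature endomorphism `R_{kl}`, with entries `R^i_{jkl}`. -/
def Rm (φ : (Fin n → ℝ) → ℝ) (k l : Fin n) (x : Fin n → ℝ) : Matrix (Fin n) (Fin n) ℝ :=
  Matrix.of fun i j => Riem φ i j k l x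

variable {φ : (Fin n → ℝ) → ℝ} {Ω : Set (Fin n → ℝ)} {x : Fin n → ℝ}

namespace HessOn

lemma smφ (H : HessOn φ Ω) (x : Fin n → ℝ) : Sm φ x := H.smooth.contDiffAt

lemma gmet_symm (H : HessOn φ Ω) (x : Fin n → ℝ) (i j : Fin n) :
    gmet φ x i j = gmet φ x j i := pd_comm (H.smφ x) i j

lemma gmet_transpose (H : HessOn φ Ω) (x : Fin n → ℝ) : (gmet φ x).transpose = gmet φ x := by
  ext i j; exact H.gmet_symm x j i

lemma gi_transpose (H : HessOn φ Ω) (x : Fin n → ℝ) : (gi φ x).transpose = gi φ x := by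
  rw [gi, Matrix.transpose_nonsing_inv, H.gmet_transpose]

lemma gi_symm (H : HessOn φ Ω) (x : Fin n → ℝ) (i j : Fin n) : gi φ x i j = gi φ x j i :=
  congrFun (congrFun (H.gi_transpose x) j) i

lemma gam12 (H : HessOn φ Ω) (x : Fin n → ℝ) (i j k : Fin n) :
    gam φ i j k x = gam φ j i k x := by
  simp only [gam, pd_comm ((H.smφ x).pd k) i j]

lemma gam23 (H : HessOn φ Ω) (x : Fin n → ℝ) (i j k : Fin n) :
    gam φ i j k x = gam φ i k j x := by
  have : pd j (pd k φ) = pd k (pd j φ) := by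
    funext y; exact pd_comm (H.smφ y) j k
  simp only [gam, this]

lemma gam13 (H : HessOn φ Ω) (x : Fin n → ℝ) (i j k : Fin n) :
    gam φ i j k x = gam φ k j i x := by
  rw [H.gam12, H.gam23, H.gam12]

lemma sm_gmet (H : HessOn φ Ω) (x : Fin n → ℝ) : SmM (gmet φ) x := fun i j =>
  ((H.smφ x).pd j).pd i

lemma sm_gam (H : HessOn φ Ω) (x : Fin n → ℝ) (i j k : Fin n) : Sm (gam φ i j k) x :=
  contDiffAt_const.mul ((((H.smφ x).pd k).pd j).pd i)

lemma sm_gi (H : HessOn φ Ω) (hx : x ∈ Ω) : SmM (gi φ) x := (H.sm_gmet x).inv (H.det x hx)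

lemma sm_Cm (H : HessOn φ Ω) (x : Fin n → ℝ) (k : Fin n) : SmM (Cm φ k) x := fun i j =>
  H.sm_gam x i k j

lemma Gm_eq (φ : (Fin n → ℝ) → ℝ) (k : Fin n) (x : Fin n → ℝ) :
    Gm φ k x = gi φ x * Cm φ k x := by
  ext a b; simp [Gm, Chr, Cm, Matrix.mul_apply]

lemma Gm_apply (φ : (Fin n → ℝ) → ℝ) (k a b : Fin n) (x : Fin n → ℝ) :
    Gm φ k x a b = Chr φ a k b x := rfl

lemma Cm_transpose (H : HessOn φ Ω) (x : Fin n → ℝ) (k : Fin n) :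
    (Cm φ k x).transpose = Cm φ k x := by
  ext a b; exact H.gam13 x b k a

lemma sm_Gm (H : HessOn φ Ω) (hx : x ∈ Ω) (k : Fin n) : SmM (Gm φ k) x := by
  rw [funext (Gm_eq φ k)]; exact (H.sm_gi hx).mul (H.sm_Cm x k)

lemma sm_Chr (H : HessOn φ Ω) (hx : x ∈ Ω) (i j k : Fin n) : Sm (Chr φ i j k) x :=
  H.sm_Gm hx j i k

lemma Chr_symm (H : HessOn φ Ω) (x : Fin n → ℝ) (i j k : Fin n) :
    Chr φ i j k x = Chr φ i k j x := by
  simp only [Chr, H.gam23 x _ j k]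

lemma sm_nab (H : HessOn φ Ω) (hx : x ∈ Ω) (k : Fin n)
    {X : Fin n → (Fin n → ℝ) → Matrix (Fin n) (Fin n) ℝ} (hX : ∀ i, SmM (X i) x) (i : Fin n) :
    SmM (nab φ k X i) x :=
  (((hX i).pdM k).add (((H.sm_Gm hx k).mul (hX i)).sub ((hX i).mul (H.sm_Gm hx k)))).sub
    (SmM.sum_smul (fun a => H.sm_Chr hx a k i) hX)

lemma sm_Nm (H : HessOn φ Ω) (hx : x ∈ Ω) (k i : Fin n) : SmM (Nm φ k i) x :=
  H.sm_nab hx k (H.sm_Gm hx) i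

lemma mul_inv (H : HessOn φ Ω) (hx : x ∈ Ω) : gmet φ x * gi φ x = 1 :=
  Matrix.mul_nonsing_inv _ (H.det x hx)

lemma inv_mul (H : HessOn φ Ω) (hx : x ∈ Ω) : gi φ x * gmet φ x = 1 :=
  Matrix.nonsing_inv_mul _ (H.det x hx)

lemma pdM_gmet (H : HessOn φ Ω) (x : Fin n → ℝ) (k : Fin n) :
    pdM k (gmet φ) x = (2 : ℝ) • Cm φ k x := by
  ext i j
  have : gam φ i k j x = (1 / 2) * pd k (pd i (pd j φ)) x := H.gam12 x i k j
  simp only [Matrix.smul_apply, Cm, Matrix.of_apply, this, smul_eq_mul, pdM]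
  change pd k (pd i (pd j φ)) x = _
  ring

/-- `∂_k g⁻¹ = -2 Γ_k g⁻¹`, from differentiating `g g⁻¹ = 1` and `∂_k g = 2 C_k`. -/
lemma pdM_gi (H : HessOn φ Ω) (hx : x ∈ Ω) (k : Fin n) :
    pdM k (gi φ) x = -(2 : ℝ) • (Gm φ k x * gi φ x) := by
  have h0 : pdM k (fun y => gmet φ y * gi φ y) x = 0 := by
    rw [pdM_congr H.isOpen (P := fun _ => 1) (fun y hy => H.mul_inv hy) hx]
    ext a b; exact pd_const _ _ _
  rw [pdM_mul (H.sm_gmet x) (H.sm_gi hx), H.pdM_gmet] at h0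
  have h1 := congrArg (gi φ x * ·) h0
  simp only [mul_add, ← mul_assoc, H.inv_mul hx, one_mul, mul_zero, mul_smul_comm,
    smul_mul_assoc, ← Gm_eq] at h1
  rw [neg_smul]
  exact eq_neg_of_add_eq_zero_right h1

/-- `Γ_k` is self-adjoint with respect to `g`. -/
lemma Gm_gi (H : HessOn φ Ω) (x : Fin n → ℝ) (k : Fin n) :
    Gm φ k x * gi φ x = gi φ x * (Gm φ k x).transpose := by
  rw [Gm_eq, Matrix.transpose_mul, H.gi_transpose, H.Cm_transpose, mul_assoc]

/-- The previous formula split evenly over the two indices of `g^{ij}`, i.e. `∇ g⁻¹ = 0`. -/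
lemma pd_gi (H : HessOn φ Ω) (hx : x ∈ Ω) (k i j : Fin n) :
    pd k (fun y => gi φ y i j) x
      = -(∑ a, Chr φ i k a x * gi φ x a j) - ∑ a, Chr φ j k a x * gi φ x i a := by
  have h := congrFun (congrFun (H.pdM_gi hx k) i) j
  have h2 := congrFun (congrFun (H.Gm_gi x k) i) j
  simp only [Matrix.mul_apply, Matrix.transpose_apply, Gm_apply] at h2
  simp only [pdM, Matrix.of_apply, Matrix.smul_apply, Matrix.mul_apply, smul_eq_mul,
    Gm_apply] at h
  have h3 : ∑ a, Chr φ j k a x * gi φ x i a = ∑ a, gi φ x i a * Chr φ j k a x :=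
    Finset.sum_congr rfl fun a _ => mul_comm _ _
  rw [h, h3, ← h2]; ring

end HessOn

/-- The pairing `Σ g^{ij} tr (X_i Y_j)` of endomorphism-valued one-forms. -/
def ip (φ : (Fin n → ℝ) → ℝ) (X Y : Fin n → (Fin n → ℝ) → Matrix (Fin n) (Fin n) ℝ)
    (x : Fin n → ℝ) : ℝ :=
  ∑ i, ∑ j, gi φ x i j * (X i x * Y j x).trace

/-- Moves a matrix acting on the first index of `G` onto the first index of the tensor `t`. -/
lemma sum_raise {G B : Matrix (Fin n) (Fin n) ℝ} {t : Fin n → Fin n → ℝ} :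
    ∑ i, ∑ j, (∑ a, B i a * G a j) * t i j = ∑ i, ∑ j, G i j * ∑ a, B a i * t a j := by
  simp only [Finset.sum_mul, Finset.mul_sum]
  rw [Finset.sum_comm]
  calc _ = ∑ j, ∑ a, ∑ i, B i a * G a j * t i j :=
        Finset.sum_congr rfl fun _ _ => Finset.sum_comm
    _ = ∑ a, ∑ j, ∑ i, B i a * G a j * t i j := Finset.sum_comm
    _ = _ := by
      refine Finset.sum_congr rfl fun _ _ => Finset.sum_congr rfl fun _ _ =>
        Finset.sum_congr rfl fun _ _ => ?_
      ring

namespace HessOn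

/-- Leibniz rule for the pairing: the Levi-Civita connection preserves `ip`. -/
lemma pd_ip (H : HessOn φ Ω) (hx : x ∈ Ω) (k : Fin n)
    {X Y : Fin n → (Fin n → ℝ) → Matrix (Fin n) (Fin n) ℝ} (hX : ∀ i, SmM (X i) x)
    (hY : ∀ i, SmM (Y i) x) :
    pd k (ip φ X Y) x = ip φ (nab φ k X) Y x + ip φ X (nab φ k Y) x := by
  have hXY : ∀ i j, SmM (fun y => X i y * Y j y) x := fun i j => (hX i).mul (hY j)
  have e1 : pd k (ip φ X Y) x
      = ∑ i, ∑ j, (pd k (fun y => gi φ y i j) x * (X i x * Y j x).trace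
        + gi φ x i j * ((pdM k (X i) x * Y j x).trace + (X i x * pdM k (Y j) x).trace)) := by
    have hs : ∀ i j, Sm (fun y => gi φ y i j * (X i y * Y j y).trace) x := fun i j =>
      (H.sm_gi hx i j).mul (hXY i j).trace
    change pd k (fun y => ∑ i, ∑ j, gi φ y i j * (X i y * Y j y).trace) x = _
    rw [pd_sum (fun i _ => Sm.sum fun j _ => hs i j)]
    refine Finset.sum_congr rfl fun i _ => ?_
    rw [pd_sum (fun j _ => hs i j)]
    refine Finset.sum_congr rfl fun j _ => ?_
    rw [pd_mul (H.sm_gi hx i j) (hXY i j).trace, pd_trace (hXY i j), pdM_mul (hX i) (hY j),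
      Matrix.trace_add]
  have e2 : ∀ i j, (nab φ k X i x * Y j x).trace + (X i x * nab φ k Y j x).trace
      = (pdM k (X i) x * Y j x).trace + (X i x * pdM k (Y j) x).trace
        - ∑ a, Chr φ a k i x * (X a x * Y j x).trace
        - ∑ a, Chr φ a k j x * (X i x * Y a x).trace := by
    intro i j
    have hc : (Gm φ k x * X i x * Y j x).trace = (X i x * Y j x * Gm φ k x).trace := by
      rw [mul_assoc, Matrix.trace_mul_comm]
    simp only [nab, sub_mul, add_mul, mul_sub, mul_add, Matrix.trace_add, Matrix.trace_sub,
      Finset.sum_mul, Finset.mul_sum, Matrix.trace_sum, smul_mul_assoc, mul_smul_comm,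
      Matrix.trace_smul, smul_eq_mul, ← mul_assoc, hc]
    ring
  have e3 : ip φ (nab φ k X) Y x + ip φ X (nab φ k Y) x
      = ∑ i, ∑ j, gi φ x i j *
        ((nab φ k X i x * Y j x).trace + (X i x * nab φ k Y j x).trace) := by
    simp only [ip, ← Finset.sum_add_distrib, mul_add]
  rw [e1, e3]
  simp only [e2, H.pd_gi hx, mul_sub, sub_mul, neg_mul, Finset.sum_sub_distrib,
    Finset.sum_add_distrib, Finset.sum_neg_distrib]
  have r1 := sum_raise (G := gi φ x) (B := fun i a => Chr φ i k a x)
    (t := fun i j => (X i x * Y j x).trace)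
  have r2 : ∑ i, ∑ j, (∑ a, Chr φ j k a x * gi φ x i a) * (X i x * Y j x).trace
      = ∑ i, ∑ j, gi φ x i j * ∑ a, Chr φ a k j x * (X i x * Y a x).trace := by
    have h := sum_raise (G := gi φ x) (B := fun i a => Chr φ i k a x)
      (t := fun i j => (X j x * Y i x).trace)
    rw [Finset.sum_comm (f := fun i j => gi φ x i j * _), Finset.sum_comm] at h
    calc _ = _ := Finset.sum_congr rfl fun i _ => Finset.sum_congr rfl fun j _ => by
            simp only [H.gi_symm x i]
      _ = _ := h
      _ = _ := Finset.sum_congr rfl fun i _ => Finset.sum_congr rfl fun j _ => by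
            rw [H.gi_symm x i j]
  rw [r1, r2]
  ring

end HessOn

/-! ### Symmetries of `∇γ`, curvature and the Ricci identity -/

namespace HessOn

lemma Km_eq (H : HessOn φ Ω) (x : Fin n → ℝ) (k i : Fin n) :
    Km φ k i x = pdM k (Cm φ i) x - ∑ r, Chr φ r k i x • Cm φ r x
      - (Gm φ k x).transpose * Cm φ i x - Cm φ i x * Gm φ k x := by
  ext p l
  have h : gam φ i p l = gam φ p i l := funext fun y => H.gam12 y i p l
  have hs : ∑ r, (Chr φ r k i x * gam φ r p l x + Chr φ r k p x * gam φ i r l x +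
      Chr φ r k l x * gam φ i p r x) = ∑ r, (Chr φ r k i x * gam φ p r l x +
      Chr φ r k p x * gam φ r i l x + gam φ p i r x * Chr φ r k l x) :=
    Finset.sum_congr rfl fun r _ => by
      rw [H.gam12 x r p l, H.gam12 x i r l, H.gam12 x i p r]; ring
  simp only [Km, covGam, Matrix.of_apply, Matrix.sub_apply, Matrix.sum_apply,
    Matrix.smul_apply, Matrix.mul_apply, Matrix.transpose_apply, Gm_apply, pdM, Cm, smul_eq_mul]
  rw [hs, h]
  simp only [Finset.sum_add_distrib]
  ring

/-- Since `∇ g⁻¹ = 0`, raising an index commutes with covariant differentiation. -/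
lemma Nm_eq (H : HessOn φ Ω) (hx : x ∈ Ω) (k i : Fin n) :
    Nm φ k i x = gi φ x * Km φ k i x := by
  have h1 : pdM k (Gm φ i) x
      = -(2 : ℝ) • (Gm φ k x * Gm φ i x) + gi φ x * pdM k (Cm φ i) x := by
    rw [funext (Gm_eq φ i), pdM_mul (H.sm_gi hx) (H.sm_Cm x i), H.pdM_gi hx, smul_mul_assoc,
      mul_assoc]
  rw [Nm, nab, h1, H.Km_eq]
  simp only [mul_sub, Finset.mul_sum, mul_smul_comm, ← mul_assoc, ← Gm_eq, ← H.Gm_gi]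
  rw [mul_assoc (Gm φ k x) (gi φ x), ← Gm_eq]
  module

/-- Both sides equal `Σ g^{rp} γ_{pab} γ_{rcd}`. -/
lemma Chr_gam (H : HessOn φ Ω) (x : Fin n → ℝ) (a b c d : Fin n) :
    ∑ r, Chr φ r a b x * gam φ r c d x = ∑ r, Chr φ r c d x * gam φ r a b x := by
  simp only [Chr, Finset.sum_mul]
  rw [Finset.sum_comm]
  refine Finset.sum_congr rfl fun r _ => Finset.sum_congr rfl fun p _ => ?_
  rw [H.gi_symm x p r]; ring

/-- `∇γ` is symmetric in the derivative index and the first index of `γ`: the fourth derivatives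
of `φ` commute, and the quadratic terms are exchanged among themselves. -/
lemma K12 (H : HessOn φ Ω) (x : Fin n → ℝ) (m i p l : Fin n) :
    covGam φ m i p l x = covGam φ i m p l x := by
  have h : pd m (gam φ i p l) x = pd i (gam φ m p l) x := by
    have h0 : ∀ a b : Fin n, pd a (gam φ b p l) x = (1 / 2) * pd a (pd b (pd p (pd l φ))) x := by
      intro a b
      change pd a (fun y => (1 / 2) * pd b (pd p (pd l φ)) y) x = _
      rw [pd_mul (f := fun _ => (1 / 2 : ℝ)) contDiffAt_const
        ((((H.smφ x).pd l).pd p).pd b), pd_const]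
      ring
    rw [h0, h0, pd_comm (((H.smφ x).pd l).pd p)]
  simp only [covGam, h, Finset.sum_add_distrib]
  have e1 : ∑ r, Chr φ r m p x * gam φ i r l x = ∑ r, Chr φ r i l x * gam φ m p r x := by
    simp only [H.gam12 x i _ l, H.gam13 x m p, H.gam23 x _ p m]
    exact H.Chr_gam x m p i l
  have e2 : ∑ r, Chr φ r m l x * gam φ i p r x = ∑ r, Chr φ r i p x * gam φ m r l x := by
    simp only [H.gam12 x m _ l, H.gam13 x i p, H.gam23 x _ p i]
    exact H.Chr_gam x m l i p
  have e3 : ∑ r, Chr φ r m i x * gam φ r p l x = ∑ r, Chr φ r i m x * gam φ r p l x :=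
    Finset.sum_congr rfl fun r _ => by rw [H.Chr_symm x r m i]
  rw [e1, e2, e3]
  ring

lemma K23 (H : HessOn φ Ω) (x : Fin n → ℝ) (m i p l : Fin n) :
    covGam φ m i p l x = covGam φ m p i l x := by
  have h : gam φ i p l = gam φ p i l := funext fun y => H.gam12 y i p l
  simp only [covGam, h]
  congr 1
  refine Finset.sum_congr rfl fun r _ => ?_
  rw [H.gam12 x r p l, H.gam12 x i r l, H.gam12 x i p r]
  ring

lemma K34 (H : HessOn φ Ω) (x : Fin n → ℝ) (m i p l : Fin n) :
    covGam φ m i p l x = covGam φ m i l p x := by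
  have h : gam φ i p l = gam φ i l p := funext fun y => H.gam23 y i p l
  simp only [covGam, h]
  congr 1
  refine Finset.sum_congr rfl fun r _ => ?_
  rw [H.gam23 x r p l, H.gam23 x i r l, H.gam23 x i p r]
  ring

lemma Km_transpose (H : HessOn φ Ω) (x : Fin n → ℝ) (m i : Fin n) :
    (Km φ m i x).transpose = Km φ m i x := by
  ext a b; exact H.K34 x m i b a

lemma Nm_gi (H : HessOn φ Ω) (hx : x ∈ Ω) (m i : Fin n) :
    Nm φ m i x * gi φ x = gi φ x * (Nm φ m i x).transpose := by
  rw [H.Nm_eq hx, Matrix.transpose_mul, H.gi_transpose, H.Km_transpose, mul_assoc]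

lemma Nm_symm (H : HessOn φ Ω) (hx : x ∈ Ω) (m i : Fin n) : Nm φ m i x = Nm φ i m x := by
  rw [H.Nm_eq hx, H.Nm_eq hx]
  congr 1
  ext a b; exact H.K12 x m i a b

lemma Nm_swap (H : HessOn φ Ω) (hx : x ∈ Ω) (m i p l : Fin n) :
    Nm φ m i x p l = Nm φ m l x p i := by
  rw [H.Nm_eq hx, H.Nm_eq hx]
  simp only [Matrix.mul_apply, Km, Matrix.of_apply]
  refine Finset.sum_congr rfl fun a _ => ?_
  rw [H.K23, H.K34, H.K23]

lemma Gm_swap (H : HessOn φ Ω) (x : Fin n → ℝ) (i p l : Fin n) :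
    Gm φ i x p l = Gm φ l x p i := H.Chr_symm x p i l

lemma pdM_Gm (φ : (Fin n → ℝ) → ℝ) (x : Fin n → ℝ) (m i : Fin n) :
    pdM m (Gm φ i) x = Nm φ m i x - (Gm φ m x * Gm φ i x - Gm φ i x * Gm φ m x)
      + ∑ a, Chr φ a m i x • Gm φ a x := by
  simp only [Nm, nab]; abel

lemma Rm_def (φ : (Fin n → ℝ) → ℝ) (x : Fin n → ℝ) (k l : Fin n) :
    Rm φ k l x = pdM k (Gm φ l) x - pdM l (Gm φ k) x
      + (Gm φ k x * Gm φ l x - Gm φ l x * Gm φ k x) := by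
  ext i j
  simp only [Rm, Riem, Matrix.of_apply, Matrix.add_apply, Matrix.sub_apply, Matrix.mul_apply,
    pdM, Gm_apply, Finset.sum_sub_distrib]

/-- The curvature of a Hessian metric is minus the commutator of the Christoffel matrices: by
symmetry of `∇γ` the derivative terms cancel. -/
lemma Rm_eq (H : HessOn φ Ω) (hx : x ∈ Ω) (k l : Fin n) :
    Rm φ k l x = -(Gm φ k x * Gm φ l x - Gm φ l x * Gm φ k x) := by
  rw [Rm_def, pdM_Gm, pdM_Gm, H.Nm_symm hx l k]
  simp only [H.Chr_symm x _ l k]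
  abel

/-- `R_{kl}` is skew-adjoint with respect to `g`. -/
lemma Rm_gi (H : HessOn φ Ω) (hx : x ∈ Ω) (k l : Fin n) :
    Rm φ k l x * gi φ x = -(gi φ x * (Rm φ k l x).transpose) := by
  rw [H.Rm_eq hx]
  simp only [Matrix.transpose_neg, Matrix.transpose_sub, Matrix.transpose_mul, neg_mul, mul_neg,
    sub_mul, mul_sub, ← mul_assoc, ← H.Gm_gi]
  simp only [mul_assoc, ← H.Gm_gi]
  simp only [H.Gm_gi]
  simp only [← mul_assoc, ← H.Gm_gi]
  abel

/-- Ricci identity: `[∇_m, ∇_k]` acts on `Γ_i` through the curvature, by a commutator on the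
endomorphism part and by `-R^a_{imk}` on the one-form index. -/
lemma ricci_identity (H : HessOn φ Ω) (hx : x ∈ Ω) (m k i : Fin n) :
    Fm φ m k i x = Fm φ k m i x + (Rm φ m k x * Gm φ i x - Gm φ i x * Rm φ m k x)
      - ∑ a, Rm φ m k x a i • Gm φ a x := by
  have hG := H.sm_Gm hx
  have hN : ∀ m k, pdM m (Nm φ k i) x = pdM m (pdM k (Gm φ i)) x
      + (pdM m (Gm φ k) x * Gm φ i x + Gm φ k x * pdM m (Gm φ i) x
        - (pdM m (Gm φ i) x * Gm φ k x + Gm φ i x * pdM m (Gm φ k) x))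
      - ∑ a, (pd m (Chr φ a k i) x • Gm φ a x + Chr φ a k i x • pdM m (Gm φ a) x) := by
    intro m k
    change pdM m (fun y => pdM k (Gm φ i) y + (Gm φ k y * Gm φ i y - Gm φ i y * Gm φ k y)
      - ∑ a, Chr φ a k i y • Gm φ a y) x = _
    rw [pdM_sub, pdM_add, pdM_sub, pdM_mul (hG k) (hG i), pdM_mul (hG i) (hG k),
      pdM_sum_smul (fun a => H.sm_Chr hx a k i) hG]
    · exact (hG k).mul (hG i)
    · exact (hG i).mul (hG k)
    · exact (hG i).pdM k
    · exact ((hG k).mul (hG i)).sub ((hG i).mul (hG k))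
    · exact ((hG i).pdM k).add (((hG k).mul (hG i)).sub ((hG i).mul (hG k)))
    · exact SmM.sum_smul (fun a => H.sm_Chr hx a k i) hG
  have hR : ∀ a, Rm φ m k x a i = pd m (Chr φ a k i) x - pd k (Chr φ a m i) x
      + ∑ r, (Chr φ a m r x * Chr φ r k i x - Chr φ a k r x * Chr φ r m i x) := fun a => rfl
  have hT : ∑ a, Chr φ a k m x • Nm φ a i x = ∑ a, Chr φ a m k x • Nm φ a i x :=
    Finset.sum_congr rfl fun a _ => by rw [H.Chr_symm x a k m]
  have hD : ∀ m k, ∑ a, Chr φ a m i x • ∑ b, Chr φ b k a x • Gm φ b x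
      = ∑ a, (∑ r, Chr φ a k r x * Chr φ r m i x) • Gm φ a x := by
    intro m k
    simp only [Finset.smul_sum, Finset.sum_smul]
    rw [Finset.sum_comm]
    refine Finset.sum_congr rfl fun a _ => Finset.sum_congr rfl fun b _ => ?_
    rw [smul_smul, mul_comm]
  have hNN : ∀ k i, Nm φ k i x = pdM k (Gm φ i) x + (Gm φ k x * Gm φ i x - Gm φ i x * Gm φ k x)
      - ∑ a, Chr φ a k i x • Gm φ a x := fun _ _ => rfl
  have hF : ∀ m k, Fm φ m k i x = pdM m (Nm φ k i) x
      + (Gm φ m x * Nm φ k i x - Nm φ k i x * Gm φ m x) - ∑ a, Chr φ a m i x • Nm φ k a x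
      - ∑ a, Chr φ a m k x • Nm φ a i x := fun _ _ => rfl
  rw [hF m k, hF k m, hT]
  generalize ∑ a, Chr φ a m k x • Nm φ a i x = T
  simp only [hR]
  rw [hN, hN, Rm_def, pdM_comm (hG i) m k]
  simp only [hNN, add_smul, sub_smul, Finset.sum_add_distrib, Finset.sum_sub_distrib, hD,
    smul_add, smul_sub, mul_add, mul_sub, add_mul, sub_mul, Finset.mul_sum, Finset.sum_mul,
    mul_smul_comm, smul_mul_assoc, mul_assoc]
  abel

end HessOn

/-! ### The second covariant derivative, traces and the Ricci tensor -/

namespace HessOn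

lemma Fm_symm (H : HessOn φ Ω) (hx : x ∈ Ω) (m k i : Fin n) : Fm φ m k i x = Fm φ m i k x := by
  have h1 : pdM m (Nm φ k i) x = pdM m (Nm φ i k) x :=
    pdM_congr H.isOpen (fun y hy => H.Nm_symm hy k i) hx m
  have h2 : ∑ a, Chr φ a m i x • Nm φ k a x = ∑ a, Chr φ a m i x • Nm φ a k x :=
    Finset.sum_congr rfl fun a _ => by rw [H.Nm_symm hx k a]
  have h3 : ∑ a, Chr φ a m k x • Nm φ a i x = ∑ a, Chr φ a m k x • Nm φ i a x :=
    Finset.sum_congr rfl fun a _ => by rw [H.Nm_symm hx i a]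
  simp only [Fm, nab]
  rw [h1, h2, h3, H.Nm_symm hx k i]
  abel

lemma Fm_swap (H : HessOn φ Ω) (hx : x ∈ Ω) (m k i p l : Fin n) :
    Fm φ m k i x p l = Fm φ m k l x p i := by
  have h1 : pdM m (Nm φ k i) x p l = pdM m (Nm φ k l) x p i :=
    pd_congr H.isOpen (fun y hy => H.Nm_swap hy k i p l) hx m
  have h2 : ∀ a, Nm φ k i x a l = Nm φ k l x a i := fun a => H.Nm_swap hx k i a l
  have h3 : ∀ a, Nm φ a i x p l = Nm φ a l x p i := fun a => H.Nm_swap hx a i p l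
  have h4 : ∑ a, Chr φ a m i x * Nm φ k a x p l = ∑ a, Nm φ k l x p a * Chr φ a m i x :=
    Finset.sum_congr rfl fun a _ => by rw [H.Nm_swap hx, mul_comm]
  have h5 : ∑ a, Chr φ a m l x * Nm φ k a x p i = ∑ a, Nm φ k i x p a * Chr φ a m l x :=
    Finset.sum_congr rfl fun a _ => by rw [H.Nm_swap hx, mul_comm]
  simp only [Fm, nab, Matrix.sub_apply, Matrix.add_apply, Matrix.mul_apply, Matrix.sum_apply,
    Matrix.smul_apply, smul_eq_mul, Gm_apply, h1, h2, h3, h4, h5]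
  ring

/-- Covariant differentiation preserves self-adjointness with respect to `g`. -/
lemma nab_gi (H : HessOn φ Ω) (hx : x ∈ Ω) (m : Fin n)
    {X : Fin n → (Fin n → ℝ) → Matrix (Fin n) (Fin n) ℝ} (hX : ∀ i, SmM (X i) x)
    (hs : ∀ i, ∀ y ∈ Ω, X i y * gi φ y = gi φ y * (X i y).transpose) (i : Fin n) :
    nab φ m X i x * gi φ x = gi φ x * (nab φ m X i x).transpose := by
  have hd : pdM m (X i) x * gi φ x + X i x * pdM m (gi φ) x
      = pdM m (gi φ) x * (X i x).transpose + gi φ x * (pdM m (X i) x).transpose := by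
    rw [← pdM_mul (hX i) (H.sm_gi hx), ← pdM_transpose, ← pdM_mul (P := fun y => (X i y).transpose)
      (H.sm_gi hx) (fun a b => hX i b a)]
    exact pdM_congr H.isOpen (hs i) hx m
  rw [H.pdM_gi hx] at hd
  have e1 : pdM m (X i) x * gi φ x = gi φ x * (pdM m (X i) x).transpose
      + (2 : ℝ) • (X i x * Gm φ m x * gi φ x) - (2 : ℝ) • (Gm φ m x * X i x * gi φ x) := by
    have e : Gm φ m x * gi φ x * (X i x).transpose = Gm φ m x * X i x * gi φ x := by
      rw [mul_assoc, ← hs i x hx, mul_assoc]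
    simp only [neg_smul, mul_neg, neg_mul, mul_smul_comm, smul_mul_assoc, e, ← mul_assoc] at hd
    rw [← sub_eq_zero] at hd ⊢
    rw [← hd]; abel
  have e2 : gi φ x * ((Gm φ m x).transpose * (X i x).transpose) = Gm φ m x * X i x * gi φ x := by
    rw [← mul_assoc, ← H.Gm_gi, mul_assoc, ← hs i x hx, mul_assoc]
  have e3 : gi φ x * ((X i x).transpose * (Gm φ m x).transpose) = X i x * Gm φ m x * gi φ x := by
    rw [← mul_assoc, ← hs i x hx, mul_assoc, ← H.Gm_gi, mul_assoc]
  simp only [nab, Matrix.transpose_sub, Matrix.transpose_add, Matrix.transpose_mul,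
    Matrix.transpose_sum, Matrix.transpose_smul, mul_sub, mul_add, sub_mul, add_mul,
    Finset.mul_sum, Finset.sum_mul, mul_smul_comm, smul_mul_assoc, e1, e2, e3,
    fun a => hs a x hx]
  module

lemma Fm_gi (H : HessOn φ Ω) (hx : x ∈ Ω) (m k i : Fin n) :
    Fm φ m k i x * gi φ x = gi φ x * (Fm φ m k i x).transpose := by
  have h := H.nab_gi hx m (X := Nm φ k) (H.sm_Nm hx k) (fun i y hy => H.Nm_gi hy k i) i
  simp only [Fm, sub_mul, Matrix.transpose_sub, mul_sub, h, Finset.sum_mul, Finset.mul_sum,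
    Matrix.transpose_sum, Matrix.transpose_smul, smul_mul_assoc, mul_smul_comm, H.Nm_gi hx]

lemma alph_eq (H : HessOn φ Ω) (x : Fin n → ℝ) (i : Fin n) :
    alph φ i x = (Gm φ i x).trace := by
  simp only [alph, Matrix.trace, Matrix.diag_apply, Gm_apply, Chr]
  exact Finset.sum_congr rfl fun r _ => Finset.sum_congr rfl fun p _ => by rw [H.gam23 x p r i]

/-- The trace of `∇X` is the covariant derivative of the one-form `tr X`. -/
lemma trace_nab (φ : (Fin n → ℝ) → ℝ) (m i : Fin n)
    {X : Fin n → (Fin n → ℝ) → Matrix (Fin n) (Fin n) ℝ} (hX : ∀ i, SmM (X i) x) :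
    (nab φ m X i x).trace = pd m (fun y => (X i y).trace) x
      - ∑ a, Chr φ a m i x * (X a x).trace := by
  simp only [nab, Matrix.trace_sub, Matrix.trace_add, Matrix.trace_sum, Matrix.trace_smul,
    smul_eq_mul, pd_trace (hX i), Matrix.trace_mul_comm (X i x)]
  ring

lemma trace_Nm (H : HessOn φ Ω) (hx : x ∈ Ω) (k i : Fin n) :
    (Nm φ k i x).trace = covAlpha φ k i x := by
  rw [Nm, trace_nab φ k i (H.sm_Gm hx)]
  simp only [covAlpha, bet, ← H.alph_eq]

lemma trace_Fm (H : HessOn φ Ω) (hx : x ∈ Ω) (m k i : Fin n) :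
    (Fm φ m k i x).trace = cov2Alpha φ m k i x := by
  rw [Fm, Matrix.trace_sub, trace_nab φ m i (H.sm_Nm hx k),
    pd_congr H.isOpen (fun y hy => H.trace_Nm hy k i) hx]
  simp only [Matrix.trace_sum, Matrix.trace_smul, smul_eq_mul, H.trace_Nm hx, cov2Alpha,
    Finset.sum_add_distrib]
  ring

/-- The Ricci tensor as the trace of the commutator formula `HessOn.Rm_eq`. -/
lemma Ricci_eq (H : HessOn φ Ω) (hx : x ∈ Ω) (j k : Fin n) :
    Ricci φ j k x = (Gm φ j x * Gm φ k x).trace - ∑ r, Chr φ r j k x * alph φ r x := by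
  have h : ∀ s, Riem φ s j s k x = ∑ r, Chr φ s k r x * Chr φ r s j x
      - ∑ r, Chr φ s s r x * Chr φ r k j x := by
    intro s
    have := congrFun (congrFun (H.Rm_eq hx s k) s) j
    simp only [Rm, Matrix.of_apply, Matrix.neg_apply, Matrix.sub_apply, Matrix.mul_apply,
      Gm_apply] at this
    rw [this]; ring
  simp only [Ricci, h, Finset.sum_sub_distrib, H.alph_eq, Matrix.trace, Matrix.diag_apply,
    Matrix.mul_apply, Gm_apply, Finset.mul_sum]
  congr 1
  · rw [Finset.sum_comm]
    refine Finset.sum_congr rfl fun r _ => Finset.sum_congr rfl fun s _ => ?_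
    rw [H.Chr_symm x r s j]; ring
  · rw [Finset.sum_comm]
    refine Finset.sum_congr rfl fun r _ => Finset.sum_congr rfl fun s _ => ?_
    rw [H.Chr_symm x r k j, H.Chr_symm x s s r]; ring

lemma ip_comm (H : HessOn φ Ω) (x : Fin n → ℝ)
    (X Y : Fin n → (Fin n → ℝ) → Matrix (Fin n) (Fin n) ℝ) : ip φ X Y x = ip φ Y X x := by
  rw [ip, Finset.sum_comm]
  refine Finset.sum_congr rfl fun r _ => Finset.sum_congr rfl fun p _ => ?_
  rw [H.gi_symm x p r, Matrix.trace_mul_comm]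

end HessOn

/-! ### Norms as traces and the three contributions -/

/-- A double index contraction written as a trace. -/
lemma trace4 {G P X Y : Matrix (Fin n) (Fin n) ℝ} (hG : G.transpose = G) :
    ∑ j, ∑ j', ∑ k, ∑ k', G j j' * P k k' * X j k * Y j' k'
      = (G * X * (P * Y.transpose)).trace := by
  have hG' : ∀ i j, G i j = G j i := fun i j => congrFun (congrFun hG j) i
  rw [Finset.sum_comm]
  simp only [Matrix.trace, Matrix.diag_apply]
  refine Finset.sum_congr rfl fun j' _ => ?_
  rw [Finset.sum_comm, Matrix.mul_apply]
  refine Finset.sum_congr rfl fun k _ => ?_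
  rw [Matrix.mul_apply, Matrix.mul_apply, Finset.sum_mul_sum]
  refine Finset.sum_congr rfl fun j _ => Finset.sum_congr rfl fun k' _ => ?_
  rw [hG' j' j, Matrix.transpose_apply]; ring

section sums
variable {ι : Type*} [Fintype ι]

lemma sum_comm44 (f : ι → ι → ι → ι → ι → ι → ι → ι → ℝ) :
    ∑ i, ∑ i', ∑ j, ∑ j', ∑ k, ∑ k', ∑ l, ∑ l', f i i' j j' k k' l l'
      = ∑ k, ∑ k', ∑ l, ∑ l', ∑ i, ∑ i', ∑ j, ∑ j', f i i' j j' k k' l l' := by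
  have h := Finset.sum_comm (s := (Finset.univ : Finset (ι × ι × ι × ι)))
    (t := (Finset.univ : Finset (ι × ι × ι × ι)))
    (f := fun p q => f p.1 p.2.1 p.2.2.1 p.2.2.2 q.1 q.2.1 q.2.2.1 q.2.2.2)
  simpa only [Fintype.sum_prod_type] using h

lemma sum_comm22 (f : ι → ι → ι → ι → ℝ) :
    ∑ i, ∑ i', ∑ j, ∑ j', f i i' j j' = ∑ j, ∑ j', ∑ i, ∑ i', f i i' j j' := by
  have h := Finset.sum_comm (s := (Finset.univ : Finset (ι × ι)))
    (t := (Finset.univ : Finset (ι × ι))) (f := fun p q => f p.1 p.2 q.1 q.2)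
  simpa only [Fintype.sum_prod_type] using h

lemma sum_comm21 (f : ι → ι → ι → ℝ) :
    ∑ i, ∑ i', ∑ j, f i i' j = ∑ j, ∑ i, ∑ i', f i i' j := by
  have h := Finset.sum_comm (s := (Finset.univ : Finset (ι × ι)))
    (t := (Finset.univ : Finset ι)) (f := fun p q => f p.1 p.2 q)
  simpa only [Fintype.sum_prod_type] using h

end sums

namespace HessOn

lemma normGamSq_eq (H : HessOn φ Ω) (x : Fin n → ℝ) :
    normGamSq φ x = ip φ (Gm φ) (Gm φ) x := by
  refine Finset.sum_congr rfl fun i _ => Finset.sum_congr rfl fun i' _ => ?_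
  have h := trace4 (P := gi φ x) (X := Cm φ i x) (Y := Cm φ i' x) (H.gi_transpose x)
  rw [H.Cm_transpose, ← Gm_eq, ← Gm_eq] at h
  rw [← h]
  simp only [Finset.mul_sum]
  refine Finset.sum_congr rfl fun j _ => Finset.sum_congr rfl fun j' _ =>
    Finset.sum_congr rfl fun k _ => Finset.sum_congr rfl fun k' _ => ?_
  simp only [Cm, Matrix.of_apply]
  rw [H.gam12 x j i k, H.gam12 x j' i' k']
  ring

lemma normCovGamSq_eq (H : HessOn φ Ω) (hx : x ∈ Ω) :
    normCovGamSq φ x = ∑ i, ∑ i', gi φ x i i' * ip φ (Nm φ i) (Nm φ i') x := by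
  refine Finset.sum_congr rfl fun i _ => Finset.sum_congr rfl fun i' _ => ?_
  rw [ip, Finset.mul_sum]
  refine Finset.sum_congr rfl fun j _ => ?_
  rw [Finset.mul_sum]
  refine Finset.sum_congr rfl fun j' _ => ?_
  have h := trace4 (P := gi φ x) (X := Km φ i j x) (Y := Km φ i' j' x) (H.gi_transpose x)
  rw [H.Km_transpose, ← H.Nm_eq hx, ← H.Nm_eq hx] at h
  rw [← h]
  simp only [Finset.mul_sum]
  refine Finset.sum_congr rfl fun k _ => Finset.sum_congr rfl fun k' _ =>
    Finset.sum_congr rfl fun l _ => Finset.sum_congr rfl fun l' _ => ?_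
  simp only [Km, Matrix.of_apply]
  ring

/-- Skew-adjointness of the curvature turns its norm into minus a trace. -/
lemma normRmSq_eq (H : HessOn φ Ω) (hx : x ∈ Ω) :
    normRmSq φ x = ∑ k, ∑ k', ∑ l, ∑ l', gi φ x k k' * gi φ x l l' *
      -(Rm φ k l x * Rm φ k' l' x).trace := by
  rw [normRmSq, sum_comm44]
  refine Finset.sum_congr rfl fun k _ => Finset.sum_congr rfl fun k' _ =>
    Finset.sum_congr rfl fun l _ => Finset.sum_congr rfl fun l' _ => ?_
  have h := trace4 (P := gi φ x) (X := Rm φ k l x) (Y := Rm φ k' l' x) (H.gmet_transpose x)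
  have h2 : (gmet φ x * Rm φ k l x * (gi φ x * (Rm φ k' l' x).transpose)).trace
      = -(Rm φ k l x * Rm φ k' l' x).trace := by
    rw [← neg_eq_iff_eq_neg.mpr (H.Rm_gi hx k' l'), mul_neg, Matrix.trace_neg, ← mul_assoc,
      Matrix.trace_mul_comm]
    simp only [← mul_assoc, H.inv_mul hx, one_mul]
  rw [← h2, ← h]
  simp only [Finset.mul_sum]
  refine Finset.sum_congr rfl fun i _ => Finset.sum_congr rfl fun i' _ =>
    Finset.sum_congr rfl fun j _ => Finset.sum_congr rfl fun j' _ => ?_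
  simp only [Rm, Matrix.of_apply]
  ring

lemma pd_normGamSq (H : HessOn φ Ω) (hx : x ∈ Ω) (k : Fin n) :
    pd k (normGamSq φ) x = 2 * ip φ (Nm φ k) (Gm φ) x := by
  rw [funext (H.normGamSq_eq), H.pd_ip hx k (H.sm_Gm hx) (H.sm_Gm hx),
    H.ip_comm x (Gm φ) (nab φ k (Gm φ))]
  change ip φ (Nm φ k) (Gm φ) x + ip φ (Nm φ k) (Gm φ) x = _
  ring

lemma ip_Fm (φ : (Fin n → ℝ) → ℝ) (x : Fin n → ℝ) (m k : Fin n) :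
    ip φ (Fm φ m k) (Gm φ) x = ip φ (nab φ m (Nm φ k)) (Gm φ) x
      - ∑ a, Chr φ a m k x * ip φ (Nm φ a) (Gm φ) x := by
  simp only [ip, Fm, sub_mul, Matrix.trace_sub, Finset.sum_mul, Matrix.trace_sum, smul_mul_assoc,
    Matrix.trace_smul, smul_eq_mul, mul_sub, Finset.sum_sub_distrib, Finset.mul_sum]
  congr 1
  rw [sum_comm21]
  refine Finset.sum_congr rfl fun a _ => Finset.sum_congr rfl fun i _ =>
    Finset.sum_congr rfl fun j _ => ?_
  ring

lemma sm_ip (H : HessOn φ Ω) (hx : x ∈ Ω)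
    {X Y : Fin n → (Fin n → ℝ) → Matrix (Fin n) (Fin n) ℝ} (hX : ∀ i, SmM (X i) x)
    (hY : ∀ i, SmM (Y i) x) : Sm (ip φ X Y) x :=
  Sm.sum fun i _ => Sm.sum fun j _ => (H.sm_gi hx i j).mul ((hX i).mul (hY j)).trace

/-- `Δ|γ|²/2` is the pairing of the rough Laplacian of `Γ` with `Γ`, plus `|∇γ|²`. -/
lemma half_lap (H : HessOn φ Ω) (hx : x ∈ Ω) :
    (1 / 2) * lap φ (normGamSq φ) x
      = (∑ m, ∑ k, gi φ x m k * ip φ (Fm φ m k) (Gm φ) x) + normCovGamSq φ x := by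
  have h2 : ∀ m k, pd m (pd k (normGamSq φ)) x - ∑ a, Chr φ a m k x * pd a (normGamSq φ) x
      = 2 * (ip φ (Fm φ m k) (Gm φ) x + ip φ (Nm φ m) (Nm φ k) x) := by
    intro m k
    rw [pd_congr H.isOpen (fun y hy => H.pd_normGamSq hy k) hx,
      pd_mul (f := fun _ => (2 : ℝ)) contDiffAt_const (H.sm_ip hx (H.sm_Nm hx k) (H.sm_Gm hx)),
      pd_const, H.pd_ip hx m (H.sm_Nm hx k) (H.sm_Gm hx), ip_Fm, H.ip_comm x (Nm φ m)]
    change _ * _ + 2 * (_ + ip φ (Nm φ k) (Nm φ m) x) - _ = _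
    simp only [H.pd_normGamSq hx, mul_left_comm _ (2 : ℝ), ← Finset.mul_sum]
    ring
  simp only [lap, h2, H.normCovGamSq_eq hx, Finset.mul_sum, ← Finset.sum_add_distrib]
  refine Finset.sum_congr rfl fun i _ => Finset.sum_congr rfl fun j _ => ?_
  ring

/-- Total symmetry of `∇γ` followed by the Ricci identity moves `∇_i` to the outside; the
commutator term becomes a trace of two curvatures by `HessOn.Rm_eq`. -/
lemma trace_Fm_Gm (H : HessOn φ Ω) (hx : x ∈ Ω) (m k i j : Fin n) :
    (Fm φ m k i x * Gm φ j x).trace = (Fm φ i m k x * Gm φ j x).trace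
      + -(Rm φ m i x * Rm φ k j x).trace
      - ∑ a, Rm φ m i x a k * (Gm φ a x * Gm φ j x).trace := by
  have h : (Gm φ k x * Rm φ m i x * Gm φ j x).trace = (Rm φ m i x * Gm φ j x * Gm φ k x).trace := by
    rw [mul_assoc, Matrix.trace_mul_comm]
  rw [H.Fm_symm hx m k i, H.ricci_identity hx m i k, H.Rm_eq hx k j]
  simp only [sub_mul, add_mul, Matrix.trace_sub, Matrix.trace_add, Finset.sum_mul,
    Matrix.trace_sum, smul_mul_assoc, Matrix.trace_smul, smul_eq_mul, mul_sub,
    neg_sub, ← mul_assoc, h]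

/-- Contraction of `∇_i ∇_m Γ_k` over `m, k` yields `∇_i ∇ α`, because `∇∇γ` is symmetric in
its last three indices and `α` is the trace of `γ`. -/
lemma cov2_part (H : HessOn φ Ω) (hx : x ∈ Ω) :
    ∑ m, ∑ k, ∑ i, ∑ j, gi φ x m k * gi φ x i j * (Fm φ i m k x * Gm φ j x).trace
      = cov2AlphaGam φ x := by
  have key : ∀ i p l, ∑ m, ∑ k, gi φ x m k * Fm φ i m k x p l
      = ∑ k, gi φ x p k * cov2Alpha φ i k l x := by
    intro i p l
    have h1 : ∀ m, ∑ k, gi φ x m k * Fm φ i m k x p l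
        = ∑ k, gi φ x p k * Fm φ i k l x m m := by
      intro m
      have h := congrFun (congrFun (H.Fm_gi hx i m l) p) m
      simp only [Matrix.mul_apply, Matrix.transpose_apply] at h
      calc _ = ∑ k, Fm φ i m l x p k * gi φ x k m := Finset.sum_congr rfl fun k _ => by
            rw [H.Fm_swap hx i m k p l, H.gi_symm x m k, mul_comm]
        _ = _ := h
        _ = _ := Finset.sum_congr rfl fun k _ => by
            rw [H.Fm_symm hx i m l, H.Fm_swap hx i l m m k, H.Fm_symm hx i l k]
    simp only [h1]
    rw [Finset.sum_comm]
    refine Finset.sum_congr rfl fun k _ => ?_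
    rw [← H.trace_Fm hx, ← Finset.mul_sum]; rfl
  rw [sum_comm22]
  refine Finset.sum_congr rfl fun i _ => Finset.sum_congr rfl fun j _ => ?_
  calc _ = gi φ x i j * ∑ p, ∑ l, (∑ m, ∑ k, gi φ x m k * Fm φ i m k x p l) * Gm φ j x l p := by
        simp only [Matrix.trace, Matrix.diag_apply, Matrix.mul_apply, Finset.sum_mul,
          Finset.mul_sum]
        rw [sum_comm22]
        refine Finset.sum_congr rfl fun _ _ => Finset.sum_congr rfl fun _ _ =>
          Finset.sum_congr rfl fun _ _ => Finset.sum_congr rfl fun _ _ => ?_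
        ring
    _ = _ := by
        have hG : ∀ l p, Gm φ j x l p = ∑ q, gi φ x l q * gam φ j p q x := by
          intro l p
          rw [Gm_apply]
          refine Finset.sum_congr rfl fun q _ => ?_
          rw [H.gam12 x q j p, H.gam23 x j q p]
        simp only [key, hG, Finset.sum_mul_sum]
        simp only [Finset.mul_sum]
        rw [Finset.sum_congr rfl fun p _ => Finset.sum_comm, Finset.sum_comm]
        refine Finset.sum_congr rfl fun k _ => Finset.sum_congr rfl fun p _ =>
          Finset.sum_congr rfl fun l _ => Finset.sum_congr rfl fun q _ => ?_
        rw [H.gi_symm x p k]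
        ring

/-- Contraction of the curvature over `m, k` yields minus the Ricci tensor, and
`tr (Γ_a Γ_j) = R_{aj} + β_{aj} - ∇_a α_j`. -/
lemma ric_part (H : HessOn φ Ω) (hx : x ∈ Ω) :
    ∑ m, ∑ k, ∑ i, ∑ j, gi φ x m k * gi φ x i j *
        ∑ a, Rm φ m i x a k * (Gm φ a x * Gm φ j x).trace
      = -(normRicSq φ x + ricBeta φ x - ricCovAlpha φ x) := by
  have key : ∀ i a, ∑ m, ∑ k, gi φ x m k * Rm φ m i x a k
      = -∑ k, gi φ x k a * Ricci φ k i x := by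
    intro i a
    have h1 : ∀ m, ∑ k, gi φ x m k * Rm φ m i x a k = -∑ k, gi φ x k a * Rm φ m i x m k := by
      intro m
      have h := congrFun (congrFun (H.Rm_gi hx m i) a) m
      simp only [Matrix.mul_apply, Matrix.transpose_apply, Matrix.neg_apply] at h
      calc _ = ∑ k, Rm φ m i x a k * gi φ x k m := Finset.sum_congr rfl fun k _ => by
            rw [H.gi_symm x m k, mul_comm]
        _ = _ := h
        _ = _ := by
            congr 1
            exact Finset.sum_congr rfl fun k _ => by rw [H.gi_symm x a k]
    simp only [h1, Finset.sum_neg_distrib]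
    rw [Finset.sum_comm]
    congr 1
    refine Finset.sum_congr rfl fun k _ => ?_
    rw [← Finset.mul_sum]; rfl
  have hR : normRicSq φ x + ricBeta φ x - ricCovAlpha φ x
      = ∑ k, ∑ a, ∑ i, ∑ j, gi φ x k a * gi φ x i j * Ricci φ k i x *
        (Gm φ a x * Gm φ j x).trace := by
    simp only [normRicSq, ricBeta, ricCovAlpha, ← Finset.sum_add_distrib,
      ← Finset.sum_sub_distrib]
    refine Finset.sum_congr rfl fun k _ => Finset.sum_congr rfl fun a _ =>
      Finset.sum_congr rfl fun i _ => Finset.sum_congr rfl fun j _ => ?_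
    rw [H.Ricci_eq hx a j, covAlpha]
    ring
  rw [hR, sum_comm22, sum_comm22 (fun k a i j => gi φ x k a * gi φ x i j * Ricci φ k i x *
    (Gm φ a x * Gm φ j x).trace)]
  simp only [← Finset.sum_neg_distrib]
  refine Finset.sum_congr rfl fun i _ => Finset.sum_congr rfl fun j _ => ?_
  calc _ = gi φ x i j * ∑ a, (∑ m, ∑ k, gi φ x m k * Rm φ m i x a k) *
        (Gm φ a x * Gm φ j x).trace := by
        simp only [Finset.sum_mul, Finset.mul_sum]
        rw [sum_comm21]
        refine Finset.sum_congr rfl fun _ _ => Finset.sum_congr rfl fun _ _ =>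
          Finset.sum_congr rfl fun _ _ => ?_
        ring
    _ = _ := by
        simp only [key, Finset.sum_mul, Finset.mul_sum, neg_mul, mul_neg]
        rw [Finset.sum_neg_distrib, Finset.sum_comm, ← Finset.sum_neg_distrib]
        refine Finset.sum_congr rfl fun k _ => ?_
        rw [← Finset.sum_neg_distrib]
        refine Finset.sum_congr rfl fun a _ => ?_
        ring

end HessOn

theorem bochner_formula_gamma {n : ℕ} (hn : 1 ≤ n) (φ : (Fin n → ℝ) → ℝ)
    (hφ : ContDiff ℝ (⊤ : ℕ∞) φ) (Ω : Set (Fin n → ℝ)) (hΩ : IsOpen Ω)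
    (hconn : IsConnected Ω) (hpos : ∀ x ∈ Ω, (gmet φ x).PosDef) :
    ∀ x ∈ Ω,
      (1 / 2) * lap φ (normGamSq φ) x
        = cov2AlphaGam φ x + normCovGamSq φ x + normRmSq φ x + normRicSq φ x
          + ricBeta φ x - ricCovAlpha φ x := by
  have H : HessOn φ Ω := ⟨hφ, hΩ, fun y hy => (hpos y hy).det_pos.ne'.isUnit⟩
  intro x hx
  have key : ∑ m, ∑ k, gi φ x m k * ip φ (Fm φ m k) (Gm φ) x
      = cov2AlphaGam φ x + normRmSq φ x
        - -(normRicSq φ x + ricBeta φ x - ricCovAlpha φ x) := by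
    rw [← H.cov2_part hx, H.normRmSq_eq hx, ← H.ric_part hx]
    simp only [ip]
    simp only [← Finset.sum_add_distrib, ← Finset.sum_sub_distrib]
    refine Finset.sum_congr rfl fun m _ => Finset.sum_congr rfl fun k _ => ?_
    rw [Finset.mul_sum]
    refine Finset.sum_congr rfl fun i _ => ?_
    rw [Finset.mul_sum]
    refine Finset.sum_congr rfl fun j _ => ?_
    rw [H.trace_Fm_Gm hx m k i j]
    ring
  rw [H.half_lap hx, key]
  ring

end
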